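/- Let X = (X_1, X_2, …) be a sequence of ℝ^d-valued random vectors with partial sums S_n := X_1 + … + X_n, let A_n be invertible d×d real matrices and b_n ∈ ℝ^d, and assume: (i) X is strongly mixing; (ii) the triangular array (A_n X_j : 1 ≤ j ≤ n, n ≥ 1) is infinitesimal; (iii) the distributions of A_n S_n + b_n converge weakly to a full probability measure μ on ℝ^d. Then sup{‖A_n A_m^{−1}‖ : n ∈ ℕ, 1 ≤ m ≤ n} < ∞. -/

import Mathlib

open MeasureTheory Filter Topology Matrix

/-- Convolution of two Borel measures on `ℝ^d`. -/
noncomputable def mconv {d : ℕ} (μ ν : Measure (Fin d → ℝ)) : Measure (Fin d → ℝ) :=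
  (μ.prod ν).map (fun p => p.1 + p.2)

/-- The Urbanik decomposability semigroup `D(μ)`: all matrices `A` such that
`μ = (A_*μ) ∗ ν` for some probability measure `ν`. -/
def UrbanikD {d : ℕ} (μ : Measure (Fin d → ℝ)) : Set (Matrix (Fin d) (Fin d) ℝ) :=
  {A | ∃ ν : Measure (Fin d → ℝ), IsProbabilityMeasure ν ∧ μ = mconv (μ.map A.mulVec) ν}

/-- A measure on `ℝ^d` is full if its support is not contained in any hyperplane,
i.e. no translate `v + L` of a proper linear subspace `L` carries all of its mass. -/
def IsFull {d : ℕ} (μ : Measure (Fin d → ℝ)) : Prop :=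
  ∀ (v : Fin d → ℝ) (L : Submodule ℝ (Fin d → ℝ)), L ≠ ⊤ → μ {x | x - v ∈ L} < 1

/-- Weak convergence of a sequence of measures on `ℝ^d`. -/
def WeakLim {d : ℕ} (μs : ℕ → Measure (Fin d → ℝ)) (μ : Measure (Fin d → ℝ)) : Prop :=
  ∀ f : BoundedContinuousFunction (Fin d → ℝ) ℝ,
    Tendsto (fun n => ∫ x, f x ∂(μs n)) atTop (𝓝 (∫ x, f x ∂μ))

/-- Partial sums `S_n = X_1 + ... + X_n`. -/
def partialSum {Ω : Type*} {d : ℕ} (X : ℕ → Ω → (Fin d → ℝ)) (n : ℕ) (ω : Ω) :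
    Fin d → ℝ :=
  ∑ j ∈ Finset.Icc 1 n, X j ω

/-- The triangular array `(A_n X_j : 1 ≤ j ≤ n, n ≥ 1)` is infinitesimal:
`sup_{1 ≤ j ≤ n} P(‖A_n X_j‖ ≥ ε) → 0` as `n → ∞`, for every `ε > 0`. -/
def Infinitesimal {Ω : Type*} [MeasurableSpace Ω] {d : ℕ} (P : Measure Ω)
    (A : ℕ → Matrix (Fin d) (Fin d) ℝ) (X : ℕ → Ω → (Fin d → ℝ)) : Prop :=
  ∀ ε > (0 : ℝ), ∀ δ > (0 : ℝ), ∃ N : ℕ, ∀ n ≥ N, ∀ j : ℕ, 1 ≤ j → j ≤ n →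
    (P {ω | ε ≤ ‖(A n).mulVec (X j ω)‖}).toReal < δ

/-- Rosenblatt's measure of dependence `α(𝒜, ℬ)` between two sub-σ-fields. -/
noncomputable def alphaSig {Ω : Type*} [MeasurableSpace Ω] (P : Measure Ω)
    (m₁ m₂ : MeasurableSpace Ω) : ℝ :=
  sSup {r | ∃ A B : Set Ω, MeasurableSet[m₁] A ∧ MeasurableSet[m₂] B ∧
    r = |(P (A ∩ B)).toReal - (P A).toReal * (P B).toReal|}

/-- The strong mixing coefficient `α(X; n) = sup_{j ≥ 1} α(σ(X_k, 1 ≤ k ≤ j), σ(X_k, k ≥ j+n))`. -/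
noncomputable def alphaMix {Ω : Type*} [MeasurableSpace Ω] {d : ℕ} (P : Measure Ω)
    (X : ℕ → Ω → (Fin d → ℝ)) (n : ℕ) : ℝ :=
  ⨆ j : {j : ℕ // 1 ≤ j}, alphaSig P
    (⨆ k ∈ Set.Icc 1 (j : ℕ), MeasurableSpace.comap (X k) inferInstance)
    (⨆ k ∈ Set.Ici ((j : ℕ) + n), MeasurableSpace.comap (X k) inferInstance)

/-- The sequence `X = (X_1, X_2, ...)` is strongly mixing: `α(X; n) → 0`. -/
def StronglyMixing {Ω : Type*} [MeasurableSpace Ω] {d : ℕ} (P : Measure Ω)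
    (X : ℕ → Ω → (Fin d → ℝ)) : Prop :=
  Tendsto (alphaMix P X) atTop (𝓝 0)

attribute [local instance] Matrix.normedAddCommGroup Matrix.normedSpace

/-- Two finite measures that differ by at most `a` on every set of a sub-σ-field assign integrals
differing by at most `a` to every `[0, 1]`-valued function measurable for that sub-σ-field. -/
theorem abs_integral_sub_integral_le {Ω : Type*} {m m₀ : MeasurableSpace Ω} (hm : m ≤ m₀)
    {ν₁ ν₂ : Measure[m₀] Ω} [IsFiniteMeasure ν₁] [IsFiniteMeasure ν₂] {a : ℝ}
    (h : ∀ s, MeasurableSet[m] s → |ν₁.real s - ν₂.real s| ≤ a)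
    {f : Ω → ℝ} (hf : Measurable[m] f) (hf0 : ∀ ω, 0 ≤ f ω) (hf1 : ∀ ω, f ω ≤ 1) :
    |∫ ω, f ω ∂ν₁ - ∫ ω, f ω ∂ν₂| ≤ a := by
  have hfm : Measurable[m₀] f := hf.mono hm le_rfl
  have key : ∀ ν : Measure[m₀] Ω, IsFiniteMeasure ν →
      ∫ ω, f ω ∂ν = ∫ t in Set.Ioc (0 : ℝ) 1, ν.real {ω | t ≤ f ω} ∧
      IntegrableOn (fun t : ℝ => ν.real {ω | t ≤ f ω}) (Set.Ioc (0 : ℝ) 1) := by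
    intro ν _
    have hint : Integrable f ν := by
      refine Integrable.of_bound hfm.aestronglyMeasurable 1 (ae_of_all _ fun ω => ?_)
      rw [Real.norm_eq_abs, abs_of_nonneg (hf0 ω)]
      exact hf1 ω
    refine ⟨hint.integral_eq_integral_Ioc_meas_le (ae_of_all _ hf0) (ae_of_all _ hf1), ?_⟩
    have hanti : Antitone (fun t : ℝ => ν.real {ω | t ≤ f ω}) := fun s t hst =>
      measureReal_mono (fun ω (hω : t ≤ f ω) => hst.trans hω)
    exact (intervalIntegrable_iff_integrableOn_Ioc_of_le zero_le_one).1
      (hanti.intervalIntegrable (μ := volume))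
  obtain ⟨e₁, i₁⟩ := key ν₁ inferInstance
  obtain ⟨e₂, i₂⟩ := key ν₂ inferInstance
  rw [e₁, e₂, ← integral_sub i₁ i₂, ← Real.norm_eq_abs]
  refine (norm_setIntegral_le_of_norm_le_const (C := a) (by simp) fun t _ => ?_).trans (by simp)
  exact h _ (measurableSet_le measurable_const hf)

/-- Covariance inequality for `[0, 1]`-valued functions. -/
theorem abs_covariance_le_of_unit_interval {Ω : Type*} {m₁ m₂ m₀ : MeasurableSpace Ω}
    (hm₁ : m₁ ≤ m₀) (hm₂ : m₂ ≤ m₀) {P : Measure[m₀] Ω} [IsProbabilityMeasure P] {a : ℝ}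
    (h : ∀ s t, MeasurableSet[m₁] s → MeasurableSet[m₂] t →
      |P.real (s ∩ t) - P.real s * P.real t| ≤ a)
    {f g : Ω → ℝ} (hf : Measurable[m₁] f) (hg : Measurable[m₂] g)
    (hf0 : ∀ ω, 0 ≤ f ω) (hf1 : ∀ ω, f ω ≤ 1) (hg0 : ∀ ω, 0 ≤ g ω) (hg1 : ∀ ω, g ω ≤ 1) :
    |∫ ω, f ω * g ω ∂P - (∫ ω, f ω ∂P) * ∫ ω, g ω ∂P| ≤ a := by
  have hfm : Measurable[m₀] f := hf.mono hm₁ le_rfl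
  have hint : Integrable f P := by
    refine Integrable.of_bound hfm.aestronglyMeasurable 1 (ae_of_all _ fun ω => ?_)
    rw [Real.norm_eq_abs, abs_of_nonneg (hf0 ω)]
    exact hf1 ω
  have hF0 : 0 ≤ ∫ ω, f ω ∂P := integral_nonneg hf0
  have hset : ∀ t, MeasurableSet[m₂] t →
      |∫ ω in t, f ω ∂P - (∫ ω, f ω ∂P) * P.real t| ≤ a := by
    intro t ht
    have := P.smul_finite (measure_ne_top P t)
    have := abs_integral_sub_integral_le hm₁ (ν₁ := P.restrict t)
      (ν₂ := (P t) • P) (a := a) (fun s hs => by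
        rw [measureReal_restrict_apply (hm₁ s hs), measureReal_ennreal_smul_apply, mul_comm]
        exact h s t hs ht) hf hf0 hf1
    rwa [integral_smul_measure, smul_eq_mul, mul_comm] at this
  have hdens : ∫⁻ ω, ENNReal.ofReal (f ω) ∂P ≠ ⊤ := by
    rw [← ofReal_integral_eq_lintegral_ofReal hint (ae_of_all _ hf0)]
    exact ENNReal.ofReal_ne_top
  have : IsFiniteMeasure (P.withDensity fun ω => ENNReal.ofReal (f ω)) :=
    isFiniteMeasure_withDensity hdens
  have := P.smul_finite (ENNReal.ofReal_ne_top (r := ∫ ω, f ω ∂P))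
  have := abs_integral_sub_integral_le hm₂
    (ν₁ := P.withDensity fun ω => ENNReal.ofReal (f ω))
    (ν₂ := ENNReal.ofReal (∫ ω, f ω ∂P) • P) (a := a) (fun t ht => by
      rw [measureReal_ennreal_smul_apply, ENNReal.toReal_ofReal hF0]
      convert hset t ht using 3
      rw [measureReal_def, withDensity_apply _ (hm₂ t ht),
        ← ofReal_integral_eq_lintegral_ofReal hint.integrableOn (ae_of_all _ hf0),
        ENNReal.toReal_ofReal (integral_nonneg hf0)]) hg hg0 hg1
  rw [integral_smul_measure, ENNReal.toReal_ofReal hF0, smul_eq_mul,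
    integral_withDensity_eq_integral_toReal_smul hfm.ennreal_ofReal
      (ae_of_all _ fun _ => ENNReal.ofReal_lt_top)] at this
  simpa [ENNReal.toReal_ofReal (hf0 _)] using this

/-- Covariance inequality for `[-1, 1]`-valued functions. -/
theorem abs_covariance_le_of_abs_le_one {Ω : Type*} {m₁ m₂ m₀ : MeasurableSpace Ω}
    (hm₁ : m₁ ≤ m₀) (hm₂ : m₂ ≤ m₀) {P : Measure[m₀] Ω} [IsProbabilityMeasure P] {a : ℝ}
    (h : ∀ s t, MeasurableSet[m₁] s → MeasurableSet[m₂] t →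
      |P.real (s ∩ t) - P.real s * P.real t| ≤ a)
    {f g : Ω → ℝ} (hf : Measurable[m₁] f) (hg : Measurable[m₂] g)
    (hf1 : ∀ ω, |f ω| ≤ 1) (hg1 : ∀ ω, |g ω| ≤ 1) :
    |∫ ω, f ω * g ω ∂P - (∫ ω, f ω ∂P) * ∫ ω, g ω ∂P| ≤ 4 * a := by
  have hfm : Measurable[m₀] f := hf.mono hm₁ le_rfl
  have hgm : Measurable[m₀] g := hg.mono hm₂ le_rfl
  have hfi : Integrable f P := .of_bound hfm.aestronglyMeasurable 1 (ae_of_all _ hf1)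
  have hgi : Integrable g P := .of_bound hgm.aestronglyMeasurable 1 (ae_of_all _ hg1)
  have hfgi : Integrable (fun ω => f ω * g ω) P := by
    refine .of_bound (hfm.mul hgm).aestronglyMeasurable 1 (ae_of_all _ fun ω => ?_)
    rw [Real.norm_eq_abs, abs_mul]
    exact mul_le_one₀ (hf1 ω) (abs_nonneg _) (hg1 ω)
  have key := abs_covariance_le_of_unit_interval hm₁ hm₂ h
    (f := fun ω => (1 + f ω) / 2) (g := fun ω => (1 + g ω) / 2)
    ((measurable_const.add hf).div_const 2) ((measurable_const.add hg).div_const 2)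
    (fun ω => by linarith [(abs_le.1 (hf1 ω)).1]) (fun ω => by linarith [(abs_le.1 (hf1 ω)).2])
    (fun ω => by linarith [(abs_le.1 (hg1 ω)).1]) (fun ω => by linarith [(abs_le.1 (hg1 ω)).2])
  have e₁ : ∀ u : Ω → ℝ, Integrable u P → ∫ ω, (1 + u ω) / 2 ∂P = (1 + ∫ ω, u ω ∂P) / 2 := by
    intro u hu
    rw [integral_div, integral_add (integrable_const _) hu]
    simp
  have e₂ : ∫ ω, (1 + f ω) / 2 * ((1 + g ω) / 2) ∂P
      = (1 + ∫ ω, f ω ∂P + ∫ ω, g ω ∂P + ∫ ω, f ω * g ω ∂P) / 4 := by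
    have : ∀ ω, (1 + f ω) / 2 * ((1 + g ω) / 2) = (1 + f ω + g ω + f ω * g ω) / 4 :=
      fun ω => by ring
    simp_rw [this]
    have i₁ : Integrable (fun ω => 1 + f ω) P := (integrable_const _).add hfi
    have i₂ : Integrable (fun ω => 1 + f ω + g ω) P := i₁.add hgi
    rw [integral_div, integral_add i₂ hfgi, integral_add i₁ hgi,
      integral_add (integrable_const _) hfi]
    simp
  rw [e₁ f hfi, e₁ g hgi, e₂] at key
  rw [abs_le] at key ⊢
  constructor <;> nlinarith [key.1, key.2]

theorem integrable_exp_mul_I {Ω : Type*} {m₀ : MeasurableSpace Ω} {P : Measure Ω}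
    [IsFiniteMeasure P] {u : Ω → ℝ} (hu : Measurable u) :
    Integrable (fun ω => Complex.exp (u ω * Complex.I)) P := by
  refine .of_bound (Measurable.aestronglyMeasurable (by fun_prop)) 1 (ae_of_all _ fun ω => ?_)
  rw [Complex.norm_exp_ofReal_mul_I]

theorem integral_exp_mul_I_eq {Ω : Type*} {m₀ : MeasurableSpace Ω} {P : Measure Ω}
    [IsFiniteMeasure P] {u : Ω → ℝ} (hu : Measurable u) :
    ∫ ω, Complex.exp (u ω * Complex.I) ∂P
      = ((∫ ω, Real.cos (u ω) ∂P : ℝ) : ℂ) + ((∫ ω, Real.sin (u ω) ∂P : ℝ) : ℂ) * Complex.I := by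
  rw [← integral_re_add_im (integrable_exp_mul_I hu)]
  simp [Complex.exp_ofReal_mul_I_re, Complex.exp_ofReal_mul_I_im]

/-- Covariance inequality for complex exponentials. -/
theorem norm_integral_exp_add_sub_le {Ω : Type*} {m₁ m₂ m₀ : MeasurableSpace Ω}
    (hm₁ : m₁ ≤ m₀) (hm₂ : m₂ ≤ m₀) {P : Measure[m₀] Ω} [IsProbabilityMeasure P] {a : ℝ}
    (h : ∀ s t, MeasurableSet[m₁] s → MeasurableSet[m₂] t →
      |P.real (s ∩ t) - P.real s * P.real t| ≤ a)
    {u v : Ω → ℝ} (hu : Measurable[m₁] u) (hv : Measurable[m₂] v) :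
    ‖∫ ω, Complex.exp ((u ω + v ω : ℝ) * Complex.I) ∂P
      - (∫ ω, Complex.exp (u ω * Complex.I) ∂P) * ∫ ω, Complex.exp (v ω * Complex.I) ∂P‖
      ≤ 16 * a := by
  have hum : Measurable[m₀] u := hu.mono hm₁ le_rfl
  have hvm : Measurable[m₀] v := hv.mono hm₂ le_rfl
  have hi : ∀ f g : ℝ → ℝ, Measurable f → Measurable g → (∀ x, |f x| ≤ 1) → (∀ x, |g x| ≤ 1) →
      Integrable (fun ω => f (u ω) * g (v ω)) P := by
    intro f g hf hg hf1 hg1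
    refine .of_bound ((hf.comp hum).mul (hg.comp hvm)).aestronglyMeasurable 1
      (ae_of_all _ fun ω => ?_)
    rw [Real.norm_eq_abs, abs_mul]
    exact mul_le_one₀ (hf1 _) (abs_nonneg _) (hg1 _)
  have hc : ∀ f g : ℝ → ℝ, Measurable f → Measurable g → (∀ x, |f x| ≤ 1) → (∀ x, |g x| ≤ 1) →
      |∫ ω, f (u ω) * g (v ω) ∂P - (∫ ω, f (u ω) ∂P) * ∫ ω, g (v ω) ∂P| ≤ 4 * a :=
    fun f g hf hg hf1 hg1 => abs_covariance_le_of_abs_le_one hm₁ hm₂ h (hf.comp hu) (hg.comp hv)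
      (fun _ => hf1 _) (fun _ => hg1 _)
  have mc := Real.measurable_cos
  have ms := Real.measurable_sin
  have bc := Real.abs_cos_le_one
  have bs := Real.abs_sin_le_one
  have huv : Measurable[m₀] fun ω => u ω + v ω := hum.add hvm
  rw [integral_exp_mul_I_eq hum, integral_exp_mul_I_eq hvm, integral_exp_mul_I_eq huv]
  simp_rw [Real.cos_add, Real.sin_add]
  rw [integral_sub (hi _ _ mc mc bc bc) (hi _ _ ms ms bs bs),
    integral_add (hi _ _ ms mc bs bc) (hi _ _ mc ms bc bs)]
  have h₁ := abs_le.1 (hc _ _ mc mc bc bc)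
  have h₂ := abs_le.1 (hc _ _ ms ms bs bs)
  have h₃ := abs_le.1 (hc _ _ ms mc bs bc)
  have h₄ := abs_le.1 (hc _ _ mc ms bc bs)
  refine (Complex.norm_le_abs_re_add_abs_im _).trans ?_
  have hre : ∀ x y : ℝ, |x| ≤ 8 * a → |y| ≤ 8 * a → |x| + |y| ≤ 16 * a :=
    fun x y hx hy => by linarith
  refine hre _ _ ?_ ?_ <;> rw [abs_le] <;> simp <;> constructor <;> linarith

theorem norm_exp_mul_I_sub_exp_mul_I_le (x y : ℝ) :
    ‖Complex.exp (x * Complex.I) - Complex.exp (y * Complex.I)‖ ≤ min 2 |x - y| := by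
  refine le_min ?_ ?_
  · refine (norm_sub_le _ _).trans ?_
    rw [Complex.norm_exp_ofReal_mul_I, Complex.norm_exp_ofReal_mul_I]
    norm_num
  · have : Complex.exp (x * Complex.I) - Complex.exp (y * Complex.I)
        = Complex.exp (y * Complex.I) * (Complex.exp (Complex.I * (x - y : ℝ)) - 1) := by
      rw [mul_sub, ← Complex.exp_add, mul_one]
      congr 2
      push_cast
      ring
    rw [this, norm_mul, Complex.norm_exp_ofReal_mul_I, one_mul]
    exact Real.norm_exp_I_mul_ofReal_sub_one_le

theorem abs_dotProduct_le {d : ℕ} (v x : Fin d → ℝ) : |v ⬝ᵥ x| ≤ d * ‖v‖ * ‖x‖ := by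
  refine (Finset.abs_sum_le_sum_abs _ _).trans ?_
  have : ∀ i ∈ Finset.univ, |v i * x i| ≤ ‖v‖ * ‖x‖ := fun i _ => by
    rw [abs_mul]
    exact mul_le_mul (norm_le_pi_norm v i) (norm_le_pi_norm x i) (abs_nonneg _) (norm_nonneg _)
  refine (Finset.sum_le_card_nsmul _ _ _ this).trans ?_
  simp [mul_assoc]

theorem measurable_dotProduct_right {d : ℕ} (v : Fin d → ℝ) :
    Measurable fun x : Fin d → ℝ => v ⬝ᵥ x :=
  (by fun_prop : Continuous fun x : Fin d → ℝ => v ⬝ᵥ x).measurable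

/-- The bounded continuous function `x ↦ min 2 (s * ‖x‖)`. -/
noncomputable def truncatedNorm (d : ℕ) (s : ℝ) (hs : 0 ≤ s) :
    BoundedContinuousFunction (Fin d → ℝ) ℝ :=
  BoundedContinuousFunction.ofNormedAddCommGroup (fun x => min 2 (s * ‖x‖)) (by fun_prop) 2
    fun x => by
      rw [Real.norm_eq_abs, abs_of_nonneg (le_min zero_le_two (by positivity))]
      exact min_le_left _ _

theorem exists_integral_truncatedNorm_lt {d : ℕ} (μ : Measure (Fin d → ℝ)) [IsFiniteMeasure μ]
    {ε : ℝ} (hε : 0 < ε) :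
    ∃ s : ℝ, ∃ hs : 0 < s, ∫ x, truncatedNorm d s hs.le x ∂μ < ε := by
  have hpos : ∀ k : ℕ, (0 : ℝ) < 1 / (k + 1) := fun k => by positivity
  have hlim : Tendsto (fun k : ℕ => ∫ x, truncatedNorm d (1 / (k + 1)) (hpos k).le x ∂μ) atTop
      (𝓝 (∫ _, (0 : ℝ) ∂μ)) := by
    refine tendsto_integral_of_dominated_convergence (fun _ => 2)
      (fun k => (truncatedNorm d _ (hpos k).le).continuous.aestronglyMeasurable)
      (integrable_const _) (fun k => ae_of_all _ fun x => ?_) (ae_of_all _ fun x => ?_)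
    · exact BoundedContinuousFunction.norm_ofNormedAddCommGroup_le _ zero_le_two _ |>.trans' <|
        BoundedContinuousFunction.norm_coe_le_norm _ x
    · have h := (tendsto_one_div_add_atTop_nhds_zero_nat (𝕜 := ℝ)).mul_const ‖x‖
      have h' := (tendsto_const_nhds (x := (2 : ℝ))).min h
      simpa [truncatedNorm] using h'
  rw [integral_zero] at hlim
  obtain ⟨k, hk⟩ := (hlim.eventually_lt_const hε).exists
  exact ⟨_, hpos k, hk⟩

theorem WeakLim.tendsto_integral_exp {d : ℕ} {μs : ℕ → Measure (Fin d → ℝ)}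
    {μ : Measure (Fin d → ℝ)} [∀ n, IsProbabilityMeasure (μs n)] [IsProbabilityMeasure μ]
    (h : WeakLim μs μ) (w : Fin d → ℝ) :
    Tendsto (fun n => ∫ x, Complex.exp ((w ⬝ᵥ x : ℝ) * Complex.I) ∂(μs n)) atTop
      (𝓝 (∫ x, Complex.exp ((w ⬝ᵥ x : ℝ) * Complex.I) ∂μ)) := by
  simp_rw [integral_exp_mul_I_eq (measurable_dotProduct_right w)]
  have hc := h (BoundedContinuousFunction.ofNormedAddCommGroup (fun x => Real.cos (w ⬝ᵥ x))
    (by fun_prop) 1 fun x => Real.abs_cos_le_one _)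
  have hs := h (BoundedContinuousFunction.ofNormedAddCommGroup (fun x => Real.sin (w ⬝ᵥ x))
    (by fun_prop) 1 fun x => Real.abs_sin_le_one _)
  exact ((Complex.continuous_ofReal.tendsto _).comp hc).add
    (((Complex.continuous_ofReal.tendsto _).comp hs).mul_const _)

/-- Weak convergence implies convergence of characteristic functions at converging arguments. -/
theorem WeakLim.tendsto_integral_exp_comp {d : ℕ} {μs : ℕ → Measure (Fin d → ℝ)}
    {μ : Measure (Fin d → ℝ)} [∀ n, IsProbabilityMeasure (μs n)] [IsProbabilityMeasure μ]
    (h : WeakLim μs μ) {n : ℕ → ℕ} (hn : Tendsto n atTop atTop) {v : ℕ → Fin d → ℝ}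
    {w : Fin d → ℝ} (hv : Tendsto v atTop (𝓝 w)) :
    Tendsto (fun k => ∫ x, Complex.exp ((v k ⬝ᵥ x : ℝ) * Complex.I) ∂(μs (n k))) atTop
      (𝓝 (∫ x, Complex.exp ((w ⬝ᵥ x : ℝ) * Complex.I) ∂μ)) := by
  have hdiff : Tendsto (fun k => ∫ x, Complex.exp ((v k ⬝ᵥ x : ℝ) * Complex.I) ∂(μs (n k))
      - ∫ x, Complex.exp ((w ⬝ᵥ x : ℝ) * Complex.I) ∂(μs (n k))) atTop (𝓝 0) := by
    rw [Metric.tendsto_nhds]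
    intro ε hε
    obtain ⟨s, hs, hsε⟩ := exists_integral_truncatedNorm_lt μ hε
    have h₁ := ((h (truncatedNorm d s hs.le)).comp hn).eventually_lt_const hsε
    have h₂ : ∀ᶠ k in atTop, d * ‖v k - w‖ < s := by
      have := ((hv.sub_const w).norm.const_mul (d : ℝ))
      rw [sub_self, norm_zero, mul_zero] at this
      exact this.eventually_lt_const hs
    filter_upwards [h₁, h₂] with k hk₁ hk₂
    rw [dist_zero_right, ← integral_sub (integrable_exp_mul_I (measurable_dotProduct_right _))
      (integrable_exp_mul_I (measurable_dotProduct_right _))]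
    refine lt_of_le_of_lt ?_ hk₁
    refine norm_integral_le_of_norm_le ((truncatedNorm d s hs.le).integrable _)
      (ae_of_all _ fun x => ?_)
    refine (norm_exp_mul_I_sub_exp_mul_I_le _ _).trans (min_le_min le_rfl ?_)
    rw [← sub_dotProduct]
    exact (abs_dotProduct_le _ _).trans (mul_le_mul_of_nonneg_right hk₂.le (norm_nonneg _))
  simpa using hdiff.add ((h.tendsto_integral_exp w).comp hn)

/-- If the modulus of the characteristic function at `1` equals one, the variable is almost surely
confined to a coset of `2πℤ`. -/
theorem exists_ae_exp_eq_of_norm_integral_exp_eq_one {Ω : Type*} {m₀ : MeasurableSpace Ω}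
    {P : Measure Ω} [IsProbabilityMeasure P] {u : Ω → ℝ} (hu : Measurable u)
    (h : 1 ≤ ‖∫ ω, Complex.exp (u ω * Complex.I) ∂P‖) :
    ∃ c : ℂ, ∀ᵐ ω ∂P, Complex.exp (u ω * Complex.I) = c := by
  set z := ∫ ω, Complex.exp (u ω * Complex.I) ∂P with hz
  have hi := integrable_exp_mul_I (P := P) hu
  have hint : Integrable (fun ω => Complex.exp (u ω * Complex.I) * starRingEnd ℂ z) P :=
    hi.mul_const _
  have hintre : Integrable (fun ω => (Complex.exp (u ω * Complex.I) * starRingEnd ℂ z).re) P :=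
    hint.re
  have hsub : Integrable
      (fun ω => 1 - (Complex.exp (u ω * Complex.I) * starRingEnd ℂ z).re) P :=
    (integrable_const _).sub hintre
  have hz1 : ‖z‖ = 1 := le_antisymm ((norm_integral_le_of_norm_le_const (C := 1)
    (ae_of_all _ fun ω => (Complex.norm_exp_ofReal_mul_I _).le)).trans (by simp)) h
  have hre : ∫ ω, (1 - (Complex.exp (u ω * Complex.I) * starRingEnd ℂ z).re) ∂P = 0 := by
    have e : ∫ ω, (Complex.exp (u ω * Complex.I) * starRingEnd ℂ z).re ∂P = 1 := by
      have := integral_re hint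
      simp only [RCLike.re_to_complex] at this
      rw [this, integral_mul_const, ← hz, Complex.mul_conj, Complex.normSq_eq_norm_sq, hz1]
      simp
    rw [integral_sub (integrable_const _) hintre, e]
    simp
  have hnorm : ∀ ω, ‖Complex.exp (u ω * Complex.I) * starRingEnd ℂ z‖ = 1 := fun ω => by
    rw [norm_mul, Complex.norm_exp_ofReal_mul_I, RCLike.norm_conj, hz1, one_mul]
  rw [integral_eq_zero_iff_of_nonneg
    (fun ω => sub_nonneg.2 ((Complex.re_le_norm _).trans (hnorm ω).le)) hsub] at hre
  refine ⟨z, ?_⟩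
  filter_upwards [hre] with ω hω
  have h1 : (Complex.exp (u ω * Complex.I) * starRingEnd ℂ z).re = 1 := by
    simp only [Pi.zero_apply] at hω
    linarith
  have h2 : Complex.exp (u ω * Complex.I) * starRingEnd ℂ z = 1 :=
    Complex.ext h1 (Complex.nonneg_iff.1 (Complex.re_eq_norm.1 (h1.trans (hnorm ω).symm))).2.symm
  have h3 : starRingEnd ℂ z * z = 1 := by
    rw [mul_comm, Complex.mul_conj, Complex.normSq_eq_norm_sq, hz1]
    simp
  calc Complex.exp (u ω * Complex.I)
      = Complex.exp (u ω * Complex.I) * (starRingEnd ℂ z * z) := by rw [h3, mul_one]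
    _ = z := by rw [← mul_assoc, h2, one_mul]

/-- A characteristic function of modulus one along a whole line belongs to a degenerate law. -/
theorem exists_ae_eq_const_of_norm_integral_exp_eq_one {Ω : Type*} {m₀ : MeasurableSpace Ω}
    {P : Measure Ω} [IsProbabilityMeasure P] {u : Ω → ℝ} (hu : Measurable u)
    (h : ∀ t : ℝ, 1 ≤ ‖∫ ω, Complex.exp ((t * u ω : ℝ) * Complex.I) ∂P‖) :
    ∃ c : ℝ, ∀ᵐ ω ∂P, u ω = c := by
  obtain ⟨c₁, hc₁⟩ := exists_ae_exp_eq_of_norm_integral_exp_eq_one (hu.const_mul 1) (h 1)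
  obtain ⟨c₂, hc₂⟩ := exists_ae_exp_eq_of_norm_integral_exp_eq_one (hu.const_mul √2) (h √2)
  obtain ⟨ω₀, h₁, h₂⟩ := (hc₁.and hc₂).exists
  refine ⟨u ω₀, ?_⟩
  filter_upwards [hc₁, hc₂] with ω k₁ k₂
  obtain ⟨a, ha⟩ := Complex.exp_eq_exp_iff_exists_int.1 (k₁.trans h₁.symm)
  obtain ⟨b, hb⟩ := Complex.exp_eq_exp_iff_exists_int.1 (k₂.trans h₂.symm)
  have ha' : u ω - u ω₀ = a * (2 * Real.pi) := by
    have := congrArg Complex.im ha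
    simp at this
    linarith
  have hb' : √2 * (u ω - u ω₀) = b * (2 * Real.pi) := by
    have := congrArg Complex.im hb
    simp at this
    linarith
  have hab : √2 * a = b := by
    rw [ha'] at hb'
    have hpi : (2 * Real.pi) ≠ 0 := by positivity
    exact mul_right_cancel₀ hpi (by linarith)
  have ha0 : a = 0 := by
    by_contra hne
    exact (irrational_sqrt_two.mul_intCast hne).ne_int b hab
  rw [ha0] at ha'
  simp at ha'
  linarith

theorem norm_exp_sum_mul_I_sub_one_le {ι : Type*} (s : Finset ι) (x : ι → ℝ) :
    ‖Complex.exp ((∑ j ∈ s, x j : ℝ) * Complex.I) - 1‖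
      ≤ ∑ j ∈ s, ‖Complex.exp (x j * Complex.I) - 1‖ := by
  classical
  induction s using Finset.induction_on with
  | empty => simp
  | insert i s hi ih =>
    rw [Finset.sum_insert hi, Finset.sum_insert hi]
    have e : Complex.exp ((x i + ∑ j ∈ s, x j : ℝ) * Complex.I) - 1
        = Complex.exp (x i * Complex.I) * (Complex.exp ((∑ j ∈ s, x j : ℝ) * Complex.I) - 1)
          + (Complex.exp (x i * Complex.I) - 1) := by
      rw [mul_sub, ← Complex.exp_add, Complex.ofReal_add, add_mul]
      ring
    rw [e, add_comm ‖_‖]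
    refine (norm_add_le _ _).trans (add_le_add ?_ le_rfl)
    rwa [norm_mul, Complex.norm_exp_ofReal_mul_I, one_mul]

/-- A variable that is small in probability has characteristic function close to one. -/
theorem integral_norm_exp_mul_I_sub_one_le {Ω : Type*} {m₀ : MeasurableSpace Ω} {P : Measure Ω}
    [IsProbabilityMeasure P] {u : Ω → ℝ} (hu : Measurable u) {ε : ℝ} (hε : 0 ≤ ε) :
    ∫ ω, ‖Complex.exp (u ω * Complex.I) - 1‖ ∂P ≤ ε + 2 * P.real {ω | ε ≤ |u ω|} := by
  have hs : MeasurableSet {ω | ε ≤ |u ω|} := measurableSet_le measurable_const hu.abs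
  have hi : Integrable ({ω | ε ≤ |u ω|}.indicator fun _ => (2 : ℝ)) P :=
    (integrable_const _).indicator hs
  have hint : ∫ ω, (ε + {ω | ε ≤ |u ω|}.indicator (fun _ => (2 : ℝ)) ω) ∂P
      = ε + 2 * P.real {ω | ε ≤ |u ω|} := by
    rw [integral_add (integrable_const _) hi, integral_indicator_const _ hs]
    simp [mul_comm]
  rw [← hint]
  refine integral_mono ((integrable_exp_mul_I hu).sub (integrable_const _)).norm
    ((integrable_const _).add hi) fun ω => ?_
  have hmin := norm_exp_mul_I_sub_exp_mul_I_le (u ω) 0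
  simp only [Complex.ofReal_zero, zero_mul, Complex.exp_zero, sub_zero] at hmin
  by_cases hω : ε ≤ |u ω|
  · have h2 := hmin.trans (min_le_left _ _)
    have hind : {ω | ε ≤ |u ω|}.indicator (fun _ => (2 : ℝ)) ω = 2 :=
      Set.indicator_of_mem (s := {ω | ε ≤ |u ω|}) hω _
    simp only [hind]
    linarith
  · have h2 := hmin.trans (min_le_right _ _)
    have hind : {ω | ε ≤ |u ω|}.indicator (fun _ => (2 : ℝ)) ω = 0 :=
      Set.indicator_of_notMem (s := {ω | ε ≤ |u ω|}) hω _
    simp only [hind]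
    linarith [not_le.1 hω]

/-- Splitting a sum into an initial block, a short gap and a nearly independent tail: the modulus
of the characteristic function of the sum is controlled by that of the initial block. -/
theorem norm_integral_exp_sum_le {Ω : Type*} {m₁ m₂ m₀ : MeasurableSpace Ω}
    (hm₁ : m₁ ≤ m₀) (hm₂ : m₂ ≤ m₀) {P : Measure[m₀] Ω} [IsProbabilityMeasure P] {a : ℝ}
    (h : ∀ s t, MeasurableSet[m₁] s → MeasurableSet[m₂] t →
      |P.real (s ∩ t) - P.real s * P.real t| ≤ a)
    {Y : ℕ → Ω → ℝ} (hY : ∀ j, Measurable[m₀] (Y j)) {m n q : ℕ} (hmn : m ≤ n)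
    (hY₁ : ∀ j ∈ Finset.Icc 1 m, Measurable[m₁] (Y j))
    (hY₂ : ∀ j, m + q ≤ j → Measurable[m₂] (Y j)) {η : ℝ} (hη0 : 0 ≤ η)
    (hη : ∀ j ∈ Finset.Icc 1 n, ∫ ω, ‖Complex.exp (Y j ω * Complex.I) - 1‖ ∂P ≤ η) :
    ‖∫ ω, Complex.exp ((∑ j ∈ Finset.Icc 1 n, Y j ω : ℝ) * Complex.I) ∂P‖
      ≤ ‖∫ ω, Complex.exp ((∑ j ∈ Finset.Icc 1 m, Y j ω : ℝ) * Complex.I) ∂P‖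
        + 16 * a + q * η := by
  set gap := (Finset.Ioc m n).filter (· < m + q) with hgap
  set tail := (Finset.Ioc m n).filter (¬ · < m + q) with htail
  set U : Ω → ℝ := fun ω => ∑ j ∈ Finset.Icc 1 m, Y j ω with hU
  set G : Ω → ℝ := fun ω => ∑ j ∈ gap, Y j ω with hG
  set V : Ω → ℝ := fun ω => ∑ j ∈ tail, Y j ω with hV
  have hsum : ∀ ω, ∑ j ∈ Finset.Icc 1 n, Y j ω = U ω + V ω + G ω := by
    intro ω
    have h₁ : Finset.Icc 1 n = Finset.Icc 1 m ∪ Finset.Ioc m n := by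
      ext j
      simp only [Finset.mem_union, Finset.mem_Icc, Finset.mem_Ioc]
      omega
    have h₂ : Disjoint (Finset.Icc 1 m) (Finset.Ioc m n) := by
      rw [Finset.disjoint_left]
      intro j
      simp only [Finset.mem_Icc, Finset.mem_Ioc]
      omega
    rw [h₁, Finset.sum_union h₂,
      ← Finset.sum_filter_add_sum_filter_not (Finset.Ioc m n) (· < m + q)]
    simp only [hU, hV, hG, hgap, htail]
    ring
  have hUm : Measurable[m₁] U := Finset.measurable_fun_sum _ hY₁
  have hVm : Measurable[m₂] V := Finset.measurable_fun_sum _ fun j hj =>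
    hY₂ j (not_lt.1 (Finset.mem_filter.1 hj).2)
  have hGm : Measurable[m₀] G := Finset.measurable_fun_sum _ fun j _ => hY j
  have hUVm : Measurable[m₀] fun ω => U ω + V ω := (hUm.mono hm₁ le_rfl).add (hVm.mono hm₂ le_rfl)
  have hgapint : ‖∫ ω, Complex.exp ((∑ j ∈ Finset.Icc 1 n, Y j ω : ℝ) * Complex.I) ∂P
      - ∫ ω, Complex.exp ((U ω + V ω : ℝ) * Complex.I) ∂P‖ ≤ q * η := by
    rw [← integral_sub (integrable_exp_mul_I (Finset.measurable_fun_sum _ fun j _ => hY j))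
      (integrable_exp_mul_I hUVm)]
    have hi : ∀ j, Integrable (fun ω => ‖Complex.exp (Y j ω * Complex.I) - 1‖) P := fun j =>
      ((integrable_exp_mul_I (hY j)).sub (integrable_const _)).norm
    have hle := norm_integral_le_of_norm_le (μ := P)
      (f := fun ω => Complex.exp ((∑ j ∈ Finset.Icc 1 n, Y j ω : ℝ) * Complex.I)
        - Complex.exp ((U ω + V ω : ℝ) * Complex.I))
      (integrable_finsetSum gap fun j _ => hi j) (ae_of_all _ fun ω => by
        rw [hsum ω, Complex.ofReal_add _ (G ω), add_mul, Complex.exp_add, ← mul_sub_one,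
          norm_mul, Complex.norm_exp_ofReal_mul_I, one_mul]
        exact norm_exp_sum_mul_I_sub_one_le gap fun j => Y j ω)
    refine hle.trans ?_
    rw [integral_finsetSum _ fun j _ => hi j]
    have hcard : gap.card ≤ q := by
      have hsub : gap ⊆ Finset.Ico m (m + q) := by
        intro j
        simp only [hgap, Finset.mem_filter, Finset.mem_Ioc, Finset.mem_Ico]
        omega
      simpa using Finset.card_le_card hsub
    refine (Finset.sum_le_card_nsmul gap _ η fun j hj => hη j ?_).trans ?_
    · simp only [hgap, Finset.mem_filter, Finset.mem_Ioc] at hj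
      rw [Finset.mem_Icc]
      omega
    · rw [nsmul_eq_mul]
      exact mul_le_mul_of_nonneg_right (by exact_mod_cast hcard) hη0
  have hcov := norm_integral_exp_add_sub_le hm₁ hm₂ h hUm hVm
  have hVle : ‖∫ ω, Complex.exp (V ω * Complex.I) ∂P‖ ≤ 1 :=
    (norm_integral_le_of_norm_le_const (C := 1)
      (ae_of_all _ fun ω => (Complex.norm_exp_ofReal_mul_I _).le)).trans (by simp)
  have hprod : ‖(∫ ω, Complex.exp (U ω * Complex.I) ∂P) * ∫ ω, Complex.exp (V ω * Complex.I) ∂P‖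
      ≤ ‖∫ ω, Complex.exp (U ω * Complex.I) ∂P‖ := by
    rw [norm_mul]
    exact mul_le_of_le_one_right (norm_nonneg _) hVle
  have t₁ := norm_le_norm_add_norm_sub'
    (∫ ω, Complex.exp ((∑ j ∈ Finset.Icc 1 n, Y j ω : ℝ) * Complex.I) ∂P)
    (∫ ω, Complex.exp ((U ω + V ω : ℝ) * Complex.I) ∂P)
  have t₂ := norm_le_norm_add_norm_sub' (∫ ω, Complex.exp ((U ω + V ω : ℝ) * Complex.I) ∂P)
    ((∫ ω, Complex.exp (U ω * Complex.I) ∂P) * ∫ ω, Complex.exp (V ω * Complex.I) ∂P)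
  linarith

theorem abs_measureReal_inter_sub_mul_le_one {Ω : Type*} {m₀ : MeasurableSpace Ω} (P : Measure Ω)
    [IsProbabilityMeasure P] (s t : Set Ω) :
    |P.real (s ∩ t) - P.real s * P.real t| ≤ 1 := by
  have h₁ : P.real (s ∩ t) ≤ 1 := measureReal_le_one
  have h₂ : P.real s ≤ 1 := measureReal_le_one
  have h₃ : P.real t ≤ 1 := measureReal_le_one
  have h₄ : P.real s * P.real t ≤ 1 := mul_le_one₀ h₂ measureReal_nonneg h₃
  have h₅ : 0 ≤ P.real s * P.real t := mul_nonneg measureReal_nonneg measureReal_nonneg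
  have h₆ : 0 ≤ P.real (s ∩ t) := measureReal_nonneg
  rw [abs_le]
  constructor <;> linarith

theorem abs_measureReal_inter_sub_mul_le_alphaMix {Ω : Type*} [MeasurableSpace Ω] {d : ℕ}
    (P : Measure Ω) [IsProbabilityMeasure P] (X : ℕ → Ω → (Fin d → ℝ)) {m : ℕ} (hm : 1 ≤ m)
    (q : ℕ) {s t : Set Ω}
    (hs : MeasurableSet[⨆ k ∈ Set.Icc 1 m, MeasurableSpace.comap (X k) inferInstance] s)
    (ht : MeasurableSet[⨆ k ∈ Set.Ici (m + q), MeasurableSpace.comap (X k) inferInstance] t) :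
    |P.real (s ∩ t) - P.real s * P.real t| ≤ alphaMix P X q := by
  have hub : ∀ m₁ m₂ : MeasurableSpace Ω, ∀ r ∈ {r | ∃ A B : Set Ω, MeasurableSet[m₁] A ∧
      MeasurableSet[m₂] B ∧ r = |(P (A ∩ B)).toReal - (P A).toReal * (P B).toReal|}, r ≤ 1 := by
    rintro m₁ m₂ r ⟨A, B, -, -, rfl⟩
    exact abs_measureReal_inter_sub_mul_le_one P A B
  refine le_trans (le_csSup ⟨1, hub _ _⟩ ⟨s, t, hs, ht, rfl⟩) ?_
  refine le_ciSup (f := fun j : {j : ℕ // 1 ≤ j} => alphaSig P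
    (⨆ k ∈ Set.Icc 1 (j : ℕ), MeasurableSpace.comap (X k) inferInstance)
    (⨆ k ∈ Set.Ici ((j : ℕ) + q), MeasurableSpace.comap (X k) inferInstance)) ?_ ⟨m, hm⟩
  refine ⟨1, ?_⟩
  rintro _ ⟨j, rfl⟩
  exact Real.sSup_le (hub _ _) zero_le_one

theorem measurable_partialSum {Ω : Type*} [MeasurableSpace Ω] {d : ℕ} {X : ℕ → Ω → (Fin d → ℝ)}
    (hX : ∀ j, Measurable (X j)) (n : ℕ) : Measurable (partialSum X n) :=
  Finset.measurable_fun_sum _ fun j _ => hX j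

theorem measurable_mulVec_partialSum_add {Ω : Type*} [MeasurableSpace Ω] {d : ℕ}
    {X : ℕ → Ω → (Fin d → ℝ)} (hX : ∀ j, Measurable (X j)) (n : ℕ)
    (B : Matrix (Fin d) (Fin d) ℝ) (c : Fin d → ℝ) :
    Measurable fun ω => B.mulVec (partialSum X n ω) + c := by
  have hB : Continuous fun x : Fin d → ℝ => B.mulVec x + c := by fun_prop
  exact hB.measurable.comp (measurable_partialSum hX n)

theorem norm_integral_exp_map_partialSum {Ω : Type*} [MeasurableSpace Ω] {d : ℕ} (P : Measure Ω)
    {X : ℕ → Ω → (Fin d → ℝ)} (hX : ∀ j, Measurable (X j)) (n : ℕ)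
    (B : Matrix (Fin d) (Fin d) ℝ) (c v : Fin d → ℝ) :
    ‖∫ x, Complex.exp ((v ⬝ᵥ x : ℝ) * Complex.I)
        ∂(P.map fun ω => B.mulVec (partialSum X n ω) + c)‖
      = ‖∫ ω, Complex.exp ((∑ j ∈ Finset.Icc 1 n, (v ᵥ* B) ⬝ᵥ X j ω : ℝ) * Complex.I) ∂P‖ := by
  have hm := measurable_dotProduct_right v
  rw [integral_map (measurable_mulVec_partialSum_add hX n B c).aemeasurable
    (Measurable.aestronglyMeasurable (by fun_prop))]
  have e : ∀ ω, Complex.exp ((v ⬝ᵥ (B.mulVec (partialSum X n ω) + c) : ℝ) * Complex.I)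
      = Complex.exp ((∑ j ∈ Finset.Icc 1 n, (v ᵥ* B) ⬝ᵥ X j ω : ℝ) * Complex.I)
        * Complex.exp ((v ⬝ᵥ c : ℝ) * Complex.I) := by
    intro ω
    rw [dotProduct_add, dotProduct_mulVec, partialSum, dotProduct_sum, Complex.ofReal_add,
      add_mul, Complex.exp_add]
  simp_rw [e]
  rw [integral_mul_const, norm_mul, Complex.norm_exp_ofReal_mul_I, mul_one]

/-- If covectors `v k → 0` and `w k → w` satisfy `v k ᵥ* A (n k) = w k ᵥ* A (m k)` with
`m k ≤ n k` and `m k → ∞`, then the characteristic function of the limit law has modulus one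
at `w`. -/
theorem one_le_norm_integral_exp_of_tendsto {d : ℕ} {Ω : Type*} [MeasurableSpace Ω]
    (P : Measure Ω) [IsProbabilityMeasure P]
    (X : ℕ → Ω → (Fin d → ℝ)) (hXmeas : ∀ j, Measurable (X j))
    (A : ℕ → Matrix (Fin d) (Fin d) ℝ) (b : ℕ → Fin d → ℝ)
    (μ : Measure (Fin d → ℝ)) [IsProbabilityMeasure μ]
    (hmix : StronglyMixing P X) (hinf : Infinitesimal P A X)
    (hconv : WeakLim (fun n => P.map (fun ω => (A n).mulVec (partialSum X n ω) + b n)) μ)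
    {m n : ℕ → ℕ} (hm : Tendsto m atTop atTop) (hmn : ∀ k, m k ≤ n k)
    {v w : ℕ → Fin d → ℝ} {w₀ : Fin d → ℝ} (hv : Tendsto v atTop (𝓝 0))
    (hw : Tendsto w atTop (𝓝 w₀)) (hvw : ∀ k, v k ᵥ* A (n k) = w k ᵥ* A (m k)) :
    1 ≤ ‖∫ x, Complex.exp ((w₀ ⬝ᵥ x : ℝ) * Complex.I) ∂μ‖ := by
  have hprob : ∀ n, IsProbabilityMeasure
      (P.map (fun ω => (A n).mulVec (partialSum X n ω) + b n)) := fun n =>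
    Measure.isProbabilityMeasure_map
      (measurable_mulVec_partialSum_add hXmeas n (A n) (b n)).aemeasurable
  have hn : Tendsto n atTop atTop := tendsto_atTop_mono hmn hm
  have hlimv := (hconv.tendsto_integral_exp_comp hn hv).norm
  have hlimw := (hconv.tendsto_integral_exp_comp hm hw).norm
  simp only [zero_dotProduct, Complex.ofReal_zero, zero_mul, Complex.exp_zero, integral_const,
    probReal_univ, one_smul, norm_one] at hlimv
  refine le_of_forall_pos_le_add fun δ hδ => ?_
  refine le_of_tendsto_of_tendsto hlimv (hlimw.add_const δ) ?_
  obtain ⟨q, hq⟩ := (hmix.eventually_lt_const (show (0 : ℝ) < δ / 32 by positivity)).exists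
  set ε : ℝ := δ / (6 * (q + 1)) with hε
  have hε0 : 0 < ε := by positivity
  obtain ⟨N, hN⟩ := hinf ε hε0 ε hε0
  have hvsmall : ∀ᶠ k in atTop, d * ‖v k‖ < 1 := by
    have := hv.norm.const_mul (d : ℝ)
    rw [norm_zero, mul_zero] at this
    exact this.eventually_lt_const one_pos
  filter_upwards [hvsmall, hn.eventually_ge_atTop N, hm.eventually_ge_atTop 1] with k hk hNk hmk
  rw [norm_integral_exp_map_partialSum P hXmeas, norm_integral_exp_map_partialSum P hXmeas,
    ← hvw k]
  have hY : ∀ j, Measurable fun ω => (v k ᵥ* A (n k)) ⬝ᵥ X j ω := fun j =>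
    (measurable_dotProduct_right _).comp (hXmeas j)
  have hcomap : ∀ j, MeasurableSpace.comap (X j) inferInstance ≤ ‹MeasurableSpace Ω› := fun j =>
    (hXmeas j).comap_le
  have hη : ∀ j ∈ Finset.Icc 1 (n k), ∫ ω, ‖Complex.exp
      (((v k ᵥ* A (n k)) ⬝ᵥ X j ω : ℝ) * Complex.I) - 1‖ ∂P ≤ 3 * ε := by
    intro j hj
    rw [Finset.mem_Icc] at hj
    refine (integral_norm_exp_mul_I_sub_one_le (hY j) hε0.le).trans ?_
    have hsub : {ω | ε ≤ |(v k ᵥ* A (n k)) ⬝ᵥ X j ω|} ⊆ {ω | ε ≤ ‖(A (n k)).mulVec (X j ω)‖} := by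
      intro ω (hω : ε ≤ _)
      rw [← dotProduct_mulVec] at hω
      exact (hω.trans (abs_dotProduct_le _ _)).trans
        (mul_le_of_le_one_left (norm_nonneg _) hk.le)
    have h₁ : P.real {ω | ε ≤ |(v k ᵥ* A (n k)) ⬝ᵥ X j ω|} < ε :=
      (measureReal_mono hsub).trans_lt (hN (n k) hNk j hj.1 hj.2)
    linarith
  have key := norm_integral_exp_sum_le (iSup₂_le fun j _ => hcomap j)
    (iSup₂_le fun j _ => hcomap j)
    (fun s t hs ht => abs_measureReal_inter_sub_mul_le_alphaMix P X hmk q hs ht)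
    hY (hmn k)
    (fun j hj => (measurable_dotProduct_right _).comp ((comap_measurable (X j)).mono
      (le_iSup₂ (f := fun i (_ : i ∈ Set.Icc 1 (m k)) =>
        MeasurableSpace.comap (X i) inferInstance) j (by simpa using hj)) le_rfl))
    (fun j hj => (measurable_dotProduct_right _).comp ((comap_measurable (X j)).mono
      (le_iSup₂ (f := fun i (_ : i ∈ Set.Ici (m k + q)) =>
        MeasurableSpace.comap (X i) inferInstance) j hj) le_rfl))
    (by positivity) hη
  have hqε : q * (3 * ε) ≤ δ / 2 := by
    have : q * (3 * ε) = q / (q + 1) * (δ / 2) := by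
      rw [hε]
      field_simp
      ring
    rw [this]
    refine mul_le_of_le_one_left (by positivity) ?_
    rw [div_le_one (by positivity)]
    linarith
  linarith

/-- A full law does not have a characteristic function of modulus one along a line. -/
theorem IsFull.exists_norm_integral_exp_lt_one {d : ℕ} {μ : Measure (Fin d → ℝ)}
    [IsProbabilityMeasure μ] (hfull : IsFull μ) {w : Fin d → ℝ} (hw : w ≠ 0) :
    ∃ t : ℝ, ‖∫ x, Complex.exp (((t • w) ⬝ᵥ x : ℝ) * Complex.I) ∂μ‖ < 1 := by
  by_contra! hcon
  obtain ⟨c, hc⟩ := exists_ae_eq_const_of_norm_integral_exp_eq_one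
    (measurable_dotProduct_right w) (fun t => by simpa [smul_dotProduct] using hcon t)
  obtain ⟨x₀, hx₀⟩ := hc.exists
  have hL : LinearMap.ker (dotProductBilin ℝ ℝ w) ≠ ⊤ := by
    intro htop
    have : w ∈ LinearMap.ker (dotProductBilin ℝ ℝ w) := htop ▸ Submodule.mem_top
    rw [LinearMap.mem_ker] at this
    exact hw (dotProduct_self_eq_zero.1 this)
  refine (hfull x₀ _ hL).ne ?_
  have hmem : ∀ᵐ x ∂μ, x ∈ {x | x - x₀ ∈ LinearMap.ker (dotProductBilin ℝ ℝ w)} := by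
    filter_upwards [hc] with x hx
    have : w ⬝ᵥ (x - x₀) = 0 := by rw [dotProduct_sub, hx, hx₀, sub_self]
    exact this
  rw [measure_eq_measure_of_null_sdiff (Set.subset_univ _) ?_, measure_univ]
  rwa [← Set.compl_eq_univ_sdiff]

/-- The normalising ratios are bounded once the smaller index is large. -/
theorem exists_forall_ge_norm_ratio_le
    {d : ℕ} {Ω : Type*} [MeasurableSpace Ω] (P : Measure Ω) [IsProbabilityMeasure P]
    (X : ℕ → Ω → (Fin d → ℝ)) (hXmeas : ∀ j, Measurable (X j))
    (A : ℕ → Matrix (Fin d) (Fin d) ℝ) (hAinv : ∀ n, IsUnit (A n)) (b : ℕ → Fin d → ℝ)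
    (μ : Measure (Fin d → ℝ)) [IsProbabilityMeasure μ] (hfull : IsFull μ)
    (hmix : StronglyMixing P X)
    (hinf : Infinitesimal P A X)
    (hconv : WeakLim (fun n => P.map (fun ω => (A n).mulVec (partialSum X n ω) + b n)) μ) :
    ∃ M : ℕ, ∀ n m : ℕ, M ≤ m → m ≤ n → ‖A n * (A m)⁻¹‖ ≤ M := by
  by_contra! hcon
  choose n m hkm hmn hlarge using hcon
  have hrow : ∀ k : ℕ, ∃ i, (k : ℝ) < ‖(A (n k) * (A (m k))⁻¹) i‖ := by
    intro k
    by_contra! hle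
    exact (hlarge k).not_ge ((pi_norm_le_iff_of_nonneg k.cast_nonneg).2 hle)
  choose i hi using hrow
  set r : ℕ → Fin d → ℝ := fun k => (A (n k) * (A (m k))⁻¹) (i k) with hr
  have hrpos : ∀ k, 0 < ‖r k‖ := fun k => k.cast_nonneg.trans_lt (hi k)
  have hrtop : Tendsto (fun k => ‖r k‖) atTop atTop :=
    tendsto_atTop_mono (fun k => (hi k).le) tendsto_natCast_atTop_atTop
  have hrA : ∀ k, r k ᵥ* A (m k) = Pi.single (i k) 1 ᵥ* A (n k) := by
    intro k
    have : r k = Pi.single (i k) 1 ᵥ* (A (n k) * (A (m k))⁻¹) := by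
      rw [single_one_vecMul]
      rfl
    rw [this, vecMul_vecMul, mul_assoc,
      nonsing_inv_mul _ ((isUnit_iff_isUnit_det _).1 (hAinv (m k))), mul_one]
  obtain ⟨w, hw, φ, hφ, hlim⟩ := (isCompact_sphere (0 : Fin d → ℝ) 1).tendsto_subseq
    (x := fun k => ‖r k‖⁻¹ • r k) fun k => by
      rw [mem_sphere_zero_iff_norm, norm_smul, norm_inv, norm_norm,
        inv_mul_cancel₀ (hrpos k).ne']
  have hw0 : w ≠ 0 := ne_zero_of_mem_unit_sphere ⟨w, hw⟩
  obtain ⟨t, ht⟩ := hfull.exists_norm_integral_exp_lt_one hw0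
  refine ht.not_ge ?_
  refine one_le_norm_integral_exp_of_tendsto P X hXmeas A b μ hmix hinf hconv
    (m := m ∘ φ) (n := n ∘ φ) (v := fun k => (t * ‖r (φ k)‖⁻¹) • Pi.single (i (φ k)) (1 : ℝ))
    (w := fun k => t • (‖r (φ k)‖⁻¹ • r (φ k)))
    ((tendsto_atTop_mono hkm tendsto_id).comp hφ.tendsto_atTop) (fun k => hmn _) ?_
    (hlim.const_smul t) fun k => ?_
  · rw [tendsto_zero_iff_norm_tendsto_zero]
    have h₀ := ((hrtop.comp hφ.tendsto_atTop).inv_tendsto_atTop).const_mul |t|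
    rw [mul_zero] at h₀
    refine h₀.congr fun k => ?_
    simp [norm_smul, Pi.norm_single]
  · simp only [Function.comp_apply]
    rw [smul_smul, smul_vecMul, smul_vecMul, hrA]

theorem norm_matrix_mul_le {d : ℕ} (B D : Matrix (Fin d) (Fin d) ℝ) :
    ‖B * D‖ ≤ d * ‖B‖ * ‖D‖ := by
  refine (norm_le_iff (by positivity)).2 fun i j => ?_
  rw [mul_apply]
  refine (norm_sum_le _ _).trans ?_
  have : ∀ k ∈ Finset.univ, ‖B i k * D k j‖ ≤ ‖B‖ * ‖D‖ := fun k _ => by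
    rw [norm_mul]
    exact mul_le_mul (norm_entry_le_entrywise_sup_norm B) (norm_entry_le_entrywise_sup_norm D)
      (norm_nonneg _) (norm_nonneg _)
  refine (Finset.sum_le_card_nsmul _ _ _ this).trans ?_
  simp [mul_assoc]

/-- **Proposition 2 (first part).** Under strong mixing, infinitesimality and weak
convergence to a full law, with all `A_n` invertible,
`sup { ‖A_n A_m⁻¹‖ : n ∈ ℕ, 1 ≤ m ≤ n } < ∞`. -/
theorem sup_norm_ratio_lt_top
    {d : ℕ} {Ω : Type*} [MeasurableSpace Ω] (P : Measure Ω) [IsProbabilityMeasure P]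
    (X : ℕ → Ω → (Fin d → ℝ)) (hXmeas : ∀ j, Measurable (X j))
    (A : ℕ → Matrix (Fin d) (Fin d) ℝ) (hAinv : ∀ n, IsUnit (A n)) (b : ℕ → Fin d → ℝ)
    (μ : Measure (Fin d → ℝ)) [IsProbabilityMeasure μ] (hfull : IsFull μ)
    (hmix : StronglyMixing P X)
    (hinf : Infinitesimal P A X)
    (hconv : WeakLim (fun n => P.map (fun ω => (A n).mulVec (partialSum X n ω) + b n)) μ) :
    ∃ C : ℝ, ∀ n m : ℕ, 1 ≤ m → m ≤ n → ‖A n * (A m)⁻¹‖ ≤ C := by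
  obtain ⟨M, hM⟩ := exists_forall_ge_norm_ratio_le P X hXmeas A hAinv b μ hfull hmix hinf hconv
  have hsmall : ∀ m, ∃ C, ∀ n, ‖A n * (A m)⁻¹‖ ≤ C := by
    intro m
    refine ⟨∑ n ∈ Finset.range M, ‖A n * (A m)⁻¹‖ + d * M * ‖A M * (A m)⁻¹‖ + M,
      fun n => ?_⟩
    have h₁ : 0 ≤ ∑ n ∈ Finset.range M, ‖A n * (A m)⁻¹‖ :=
      Finset.sum_nonneg fun _ _ => norm_nonneg _
    have h₂ : 0 ≤ d * M * ‖A M * (A m)⁻¹‖ := by positivity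
    have h₃ : (0 : ℝ) ≤ M := M.cast_nonneg
    rcases lt_or_ge n M with hn | hn
    · have := Finset.single_le_sum (f := fun n => ‖A n * (A m)⁻¹‖)
        (fun _ _ => norm_nonneg _) (Finset.mem_range.2 hn)
      linarith
    · have e : A n * (A m)⁻¹ = (A n * (A M)⁻¹) * (A M * (A m)⁻¹) := by
        rw [mul_assoc, ← mul_assoc (A M)⁻¹,
          nonsing_inv_mul _ ((isUnit_iff_isUnit_det _).1 (hAinv M)), one_mul]
      have h₄ : ‖A n * (A m)⁻¹‖ ≤ d * M * ‖A M * (A m)⁻¹‖ := by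
        rw [e]
        refine (norm_matrix_mul_le _ _).trans ?_
        gcongr
        exact hM n M le_rfl hn
      linarith
  choose C hC using hsmall
  refine ⟨∑ m ∈ Finset.range M, |C m| + M, fun n m _ hmn => ?_⟩
  have h₁ : 0 ≤ ∑ m ∈ Finset.range M, |C m| := Finset.sum_nonneg fun _ _ => abs_nonneg _
  have h₂ : (0 : ℝ) ≤ M := M.cast_nonneg
  rcases lt_or_ge m M with hm | hm
  · have h₃ := Finset.single_le_sum (f := fun m => |C m|)
      (fun _ _ => abs_nonneg _) (Finset.mem_range.2 hm)
    linarith [hC m n, le_abs_self (C m)]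
  · linarith [hM n m hm hmn]
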